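/- arXiv:2410.00870 — 2 statements merged into one kernel-verified Lean document; each statement's English description precedes it below -/
import Mathlib

section
/- Let a, b ∈ ℚ and suppose f(x) = x^12 + a·x^6 + b is irreducible over ℚ. Assume: b is not a square in ℚ; b·(a^2 − 4b) is not a square in ℚ; 3·(4b − a^2) is not a square in ℚ; −3b is not a square in ℚ; 3b·(4b − a^2) is not a square in ℚ; and either b is a cube in ℚ or the cubic x^3 − 3·b·x + a·b has a rational root. Then the Galois group of f over ℚ has order 48. -/
open Polynomial

/-!
Write `f = p(X ^ 6)` with `p = X ^ 2 + a X + b`, let `θ` be a root of `f`, and let `M = F(θ)`, of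
degree 12 over the base field `F`. Let `L` be the splitting field of `f`.

If the cubic `X ^ 3 - 3 b X + a b` has a root in `F`, then `b` has a cube root `γ` in `M`. If
`θ ^ 6` and `φ ^ 6` are the two roots of `p`, then `(θ φ) ^ 6 = b`, so every root of `f` is `θ` or
`√b / (θ γ)` up to a sixth root of unity. Hence `L = M(√b, √-3)`.

It remains to see that `b`, `-3` and `-3 b` are not squares in `M`. The degree of `M` over
`F(θ ^ 3)` is odd, so an element of `F` that is a square in `M` is already a square in `F(θ ^ 3)`,
which is obtained from `F` by adjoining a root `y` of `p` and then a square root of `y`. As `y` has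
norm `b`, which is not a square, an element `e` of `F` can become a square there only if `e` or
`e (a ^ 2 - 4 b)` is a square in `F`. Hence `[L : F] = 12 * 4`.
-/

open IntermediateField

theorem isSquare_iff_exists_sq_eq {R : Type*} [Monoid R] {c : R} :
    IsSquare c ↔ ∃ s, s ^ 2 = c := by
  simp only [isSquare_iff_exists_sq, eq_comm]

section Squares

variable {K L : Type*} [Field K] [Field L] [Algebra K L]

theorem isSquare_of_isSquare_algebraMap_of_odd_finrank (hodd : Odd (Module.finrank K L)) {e : K}
    (he : IsSquare (algebraMap K L e)) : IsSquare e := by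
  obtain ⟨n, hn⟩ := hodd
  obtain rfl | he0 := eq_or_ne e 0
  · exact IsSquare.zero
  have hpow : IsSquare (e ^ n * e ^ n * e) := by
    have := he.map (Algebra.norm K)
    rwa [Algebra.norm_algebraMap, hn, pow_succ, two_mul, pow_add] at this
  obtain ⟨v, hv⟩ := hpow
  refine ⟨v / e ^ n, ?_⟩
  field_simp
  linear_combination hv

variable {s : L} {c : K}

theorem exists_eq_add_mul_of_mem_adjoin_sqrt (hs : s ^ 2 = algebraMap K L c) {x : L}
    (hx : x ∈ K⟮s⟯) : ∃ u v : K, x = algebraMap K L u + algebraMap K L v * s := by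
  have hint : IsIntegral K s := .of_pow two_pos (hs ▸ isIntegral_algebraMap)
  rw [← mem_toSubalgebra, adjoin_simple_toSubalgebra_of_isAlgebraic hint.isAlgebraic] at hx
  induction hx using Algebra.adjoin_induction with
  | mem x hx => exact ⟨0, 1, by simpa using hx⟩
  | algebraMap r => exact ⟨r, 0, by simp⟩
  | add x y _ _ hx hy =>
    obtain ⟨u, v, rfl⟩ := hx
    obtain ⟨u', v', rfl⟩ := hy
    exact ⟨u + u', v + v', by simp only [map_add]; ring⟩
  | mul x y _ _ hx hy =>
    obtain ⟨u, v, rfl⟩ := hx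
    obtain ⟨u', v', rfl⟩ := hy
    refine ⟨u * u' + v * v' * c, u * v' + v * u', ?_⟩
    simp only [map_add, map_mul]
    linear_combination algebraMap K L v * algebraMap K L v' * hs

theorem isSquare_or_isSquare_mul_of_mem_adjoin_sqrt (h2 : (2 : L) ≠ 0)
    (hs : s ^ 2 = algebraMap K L c) {x : L} (hx : x ∈ K⟮s⟯) {e : K}
    (hxe : x ^ 2 = algebraMap K L e) : IsSquare e ∨ IsSquare (e * c) := by
  obtain ⟨u, v, rfl⟩ := exists_eq_add_mul_of_mem_adjoin_sqrt hs hx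
  have hinj := (algebraMap K L).injective
  by_cases hsK : s ∈ (⊥ : IntermediateField K L)
  · obtain ⟨r, rfl⟩ := mem_bot.1 hsK
    exact .inl ⟨u + v * r, hinj (by simp only [map_mul, map_add]; linear_combination -hxe)⟩
  have h2K : (2 : K) ≠ 0 := fun h ↦ h2 (by
    simpa only [map_ofNat, map_zero] using congrArg (algebraMap K L) h)
  have hrel : algebraMap K L (e - u ^ 2 - v ^ 2 * c) = algebraMap K L (2 * u * v) * s := by
    simp only [map_sub, map_mul, map_pow, map_ofNat]
    linear_combination -hxe + algebraMap K L v ^ 2 * hs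
  have huv : 2 * u * v = 0 := by
    by_contra huv
    have huv' : algebraMap K L (2 * u * v) ≠ 0 := (_root_.map_ne_zero _).2 huv
    refine hsK (mem_bot.2 ⟨(e - u ^ 2 - v ^ 2 * c) / (2 * u * v), ?_⟩)
    rw [map_div₀, hrel, mul_div_cancel_left₀ _ huv']
  have he : e = u ^ 2 + v ^ 2 * c := by
    rw [huv, map_zero, zero_mul, map_eq_zero] at hrel
    linear_combination hrel
  obtain hu | hv : u = 0 ∨ v = 0 := by simpa [h2K] using huv
  · exact .inr ⟨v * c, by rw [he, hu]; ring⟩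
  · exact .inl ⟨u, by rw [he, hv]; ring⟩

theorem finrank_adjoin_sqrt (hs : s ^ 2 = algebraMap K L c) (hc : ¬IsSquare c) :
    Module.finrank K K⟮s⟯ = 2 := by
  have hirr : Irreducible (X ^ 2 - C c : K[X]) :=
    X_pow_sub_C_irreducible_of_prime Nat.prime_two fun x hx ↦
      hc (isSquare_iff_exists_sq_eq.2 ⟨x, hx⟩)
  have hmonic : (X ^ 2 - C c : K[X]).Monic := monic_X_pow_sub_C c two_ne_zero
  have hroot : aeval s (X ^ 2 - C c : K[X]) = 0 := by simp [hs]
  rw [adjoin.finrank ⟨_, hmonic, hroot⟩,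
    ← minpoly.eq_of_irreducible_of_monic hirr hroot hmonic, natDegree_X_pow_sub_C]

theorem finrank_adjoin_sqrt_pair (h2 : (2 : L) ≠ 0) {t : L} {d : K}
    (hs : s ^ 2 = algebraMap K L c) (ht : t ^ 2 = algebraMap K L d)
    (hc : ¬IsSquare c) (hd : ¬IsSquare d) (hdc : ¬IsSquare (d * c)) :
    Module.finrank K K⟮s, t⟯ = 4 := by
  have hdN : ¬IsSquare (algebraMap K K⟮s⟯ d) := fun h ↦ by
    obtain ⟨x, hx⟩ := isSquare_iff_exists_sq_eq.1 h
    have hxL : (x : L) ^ 2 = algebraMap K L d := congrArg (algebraMap K⟮s⟯ L) hx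
    exact (isSquare_or_isSquare_mul_of_mem_adjoin_sqrt h2 hs x.2 hxL).elim hd hdc
  have hfin := Module.finrank_mul_finrank K K⟮s⟯ K⟮s⟯⟮t⟯
  rw [finrank_adjoin_sqrt hs hc, finrank_adjoin_sqrt (c := algebraMap K K⟮s⟯ d) ht hdN] at hfin
  rw [← adjoin_simple_adjoin_simple]
  exact hfin.symm

end Squares

section Degree

variable {F M : Type*} [Field F] [Field M] [Algebra F M] {p : F[X]} {θ : M}

theorem finrank_adjoin_simple_of_irreducible (hp : Irreducible p) (hθ : aeval θ p = 0) :
    Module.finrank F F⟮θ⟯ = p.natDegree := by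
  have hint : IsIntegral F θ := IsAlgebraic.isIntegral ⟨p, hp.ne_zero, hθ⟩
  rw [adjoin.finrank hint, ← minpoly.eq_of_irreducible hp hθ,
    natDegree_mul_C (inv_ne_zero (leadingCoeff_ne_zero.2 hp.ne_zero))]

theorem finrank_adjoin_pow_of_irreducible_expand {n : ℕ} (hn : n ≠ 0)
    (hirr : Irreducible (expand F n p)) (hθ : aeval θ (expand F n p) = 0) (htop : F⟮θ⟯ = ⊤) :
    Module.finrank F⟮θ ^ n⟯ M = n := by
  have hp : Irreducible p := of_irreducible_expand hn hirr
  have hθn : aeval (θ ^ n) p = 0 := by rwa [← expand_aeval]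
  have hM : Module.finrank F M = p.natDegree * n := by
    rw [← finrank_top', ← htop, finrank_adjoin_simple_of_irreducible hirr hθ, natDegree_expand]
  have hmul := Module.finrank_mul_finrank F F⟮θ ^ n⟯ M
  rw [finrank_adjoin_simple_of_irreducible hp hθn, hM] at hmul
  exact Nat.eq_of_mul_eq_mul_left hp.natDegree_pos hmul

end Degree

section QuadraticRoot

variable {F M : Type*} [Field F] [Field M] [Algebra F M] {a b : F}

theorem norm_gen_of_irreducible_quadratic (hp : Irreducible (X ^ 2 + C a * X + C b)) {y : M}
    (hy : aeval y (X ^ 2 + C a * X + C b) = 0) :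
    Algebra.norm F (AdjoinSimple.gen F y) = b := by
  have hmonic : (X ^ 2 + C a * X + C b).Monic := by monicity!
  have hmin : minpoly F y = X ^ 2 + C a * X + C b :=
    (minpoly.eq_of_irreducible_of_monic hp hy hmonic).symm
  have hint : IsIntegral F y := ⟨_, hmonic, hy⟩
  have hdeg : (X ^ 2 + C a * X + C b).natDegree = 2 := by compute_degree!
  rw [← adjoin.powerBasis_gen hint, Algebra.PowerBasis.norm_gen_eq_coeff_zero_minpoly,
    adjoin.powerBasis_gen, adjoin.powerBasis_dim, minpoly_gen, hmin, hdeg]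
  simp

theorem not_isSquare_algebraMap_mul_gen (hp : Irreducible (X ^ 2 + C a * X + C b))
    (hb : ¬IsSquare b) {y : M} (hy : aeval y (X ^ 2 + C a * X + C b) = 0) {e : F} (he : e ≠ 0) :
    ¬IsSquare (algebraMap F F⟮y⟯ e * AdjoinSimple.gen F y) := fun h ↦ by
  have hfin : Module.finrank F F⟮y⟯ = 2 := by
    rw [finrank_adjoin_simple_of_irreducible hp hy]; compute_degree!
  obtain ⟨v, hv⟩ : IsSquare (e ^ 2 * b) := by
    have := h.map (Algebra.norm F)
    rwa [map_mul, Algebra.norm_algebraMap, hfin, norm_gen_of_irreducible_quadratic hp hy] at this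
  refine hb ⟨v / e, ?_⟩
  field_simp
  linear_combination hv

theorem isSquare_or_isSquare_mul_discrim_of_mem_adjoin_root (h2 : (2 : M) ≠ 0) {y : M}
    (hy : aeval y (X ^ 2 + C a * X + C b) = 0) {x : M} (hx : x ∈ F⟮y⟯) {e : F}
    (hxe : x ^ 2 = algebraMap F M e) : IsSquare e ∨ IsSquare (e * (a ^ 2 - 4 * b)) := by
  obtain ⟨δ, hδ⟩ : ∃ δ, δ = 2 * y + algebraMap F M a := ⟨_, rfl⟩
  have hδsq : δ ^ 2 = algebraMap F M (a ^ 2 - 4 * b) := by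
    simp only [map_add, map_mul, map_pow, aeval_X, aeval_C] at hy
    simp only [hδ, map_sub, map_mul, map_pow, map_ofNat]
    linear_combination 4 * hy
  have hyδ : y ∈ F⟮δ⟯ := by
    have hy2 : y = (δ - algebraMap F M a) / 2 := by
      rw [hδ, add_sub_cancel_right, mul_div_cancel_left₀ y h2]
    rw [hy2]
    exact div_mem (sub_mem (mem_adjoin_simple_self F δ) (F⟮δ⟯.algebraMap_mem a))
      (F⟮δ⟯.natCast_mem 2)
  exact isSquare_or_isSquare_mul_of_mem_adjoin_sqrt h2 hδsq (adjoin_simple_le_iff.2 hyδ hx) hxe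

theorem mem_adjoin_simple_of_tower (E : IntermediateField F M) {s x : M} (hx : x ∈ F⟮s⟯) :
    x ∈ E⟮s⟯ := by
  have hle : F⟮s⟯ ≤ E⟮s⟯.restrictScalars F :=
    adjoin_simple_le_iff.2 ((mem_restrictScalars F).2 (mem_adjoin_simple_self E s))
  exact (mem_restrictScalars F).1 (hle hx)

theorem isSquare_or_isSquare_mul_discrim_of_mem_adjoin_sqrt_root (h2 : (2 : M) ≠ 0)
    (hp : Irreducible (X ^ 2 + C a * X + C b)) (hb : ¬IsSquare b) {η : M}
    (hη : aeval (η ^ 2) (X ^ 2 + C a * X + C b) = 0) {x : M} (hx : x ∈ F⟮η⟯) {e : F}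
    (hxe : x ^ 2 = algebraMap F M e) : IsSquare e ∨ IsSquare (e * (a ^ 2 - 4 * b)) := by
  obtain rfl | he := eq_or_ne e 0
  · exact .inl IsSquare.zero
  have hηQ : η ^ 2 = algebraMap F⟮η ^ 2⟯ M (AdjoinSimple.gen F (η ^ 2)) :=
    (AdjoinSimple.algebraMap_gen F (η ^ 2)).symm
  have hxeQ : x ^ 2 = algebraMap F⟮η ^ 2⟯ M (algebraMap F F⟮η ^ 2⟯ e) := by
    rw [hxe, IsScalarTower.algebraMap_apply F F⟮η ^ 2⟯ M]
  obtain hQ | hQ := isSquare_or_isSquare_mul_of_mem_adjoin_sqrt h2 hηQ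
    (mem_adjoin_simple_of_tower F⟮η ^ 2⟯ hx) hxeQ
  · obtain ⟨w, hw⟩ := isSquare_iff_exists_sq_eq.1 hQ
    have hwM : (w : M) ^ 2 = algebraMap F M e := congrArg Subtype.val hw
    exact isSquare_or_isSquare_mul_discrim_of_mem_adjoin_root h2 hη w.2 hwM
  · exact absurd hQ (not_isSquare_algebraMap_mul_gen hp hb hη he)

theorem isSquare_or_isSquare_mul_discrim_of_isSquare_algebraMap (h2 : (2 : M) ≠ 0) {n : ℕ}
    (hn : Odd n) (hirr : Irreducible (expand F (2 * n) (X ^ 2 + C a * X + C b)))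
    (hb : ¬IsSquare b) {θ : M} (hθ : aeval θ (expand F (2 * n) (X ^ 2 + C a * X + C b)) = 0)
    (htop : F⟮θ⟯ = ⊤) {e : F} (he : IsSquare (algebraMap F M e)) :
    IsSquare e ∨ IsSquare (e * (a ^ 2 - 4 * b)) := by
  have hη : aeval ((θ ^ n) ^ 2) (X ^ 2 + C a * X + C b) = 0 := by
    rwa [expand_aeval, mul_comm, pow_mul] at hθ
  have hodd : Odd (Module.finrank F⟮θ ^ n⟯ M) := by
    rw [mul_comm, expand_mul] at hirr hθ
    rwa [finrank_adjoin_pow_of_irreducible_expand hn.pos.ne' hirr hθ htop]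
  have heN : IsSquare (algebraMap F F⟮θ ^ n⟯ e) :=
    isSquare_of_isSquare_algebraMap_of_odd_finrank hodd he
  obtain ⟨x, hx⟩ := isSquare_iff_exists_sq_eq.1 heN
  exact isSquare_or_isSquare_mul_discrim_of_mem_adjoin_sqrt_root h2
    (of_irreducible_expand (by have := hn.pos; positivity) hirr) hb hη x.2
    (congrArg (algebraMap F⟮θ ^ n⟯ M) hx)

end QuadraticRoot

theorem exists_pow_three_eq_mul_of_cubic_resolvent {K : Type*} [Field K] {a b r y : K}
    (hr : r ^ 3 - 3 * b * r + a * b = 0) (hrb : r ^ 2 - b ≠ 0) (hy : y ^ 2 + a * y + b = 0) :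
    ∃ x, x ^ 3 = b * y := by
  -- `r` is the trace of the root `x` of `X ^ 2 - r X + b`; reducing `x ^ 3 = b * y` modulo this
  -- quadratic gives a linear equation for `x`.
  obtain ⟨x, hx⟩ : ∃ x, (r ^ 2 - b) * x = b * (y + r) :=
    ⟨b * (y + r) / (r ^ 2 - b), by field_simp⟩
  have hquad : x ^ 2 = r * x - b := by
    refine mul_left_cancel₀ (pow_ne_zero 2 hrb) ?_
    linear_combination ((r ^ 2 - b) * x + b * (y + r) - r * (r ^ 2 - b)) * hx +
      b * (b * hy - y * hr)
  exact ⟨x, by linear_combination (x + r) * hquad + hx⟩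

section SixthRoots

variable {L : Type*} [Field L]

theorem isPrimitiveRoot_six_of_sq_eq_neg_three (h6 : (6 : L) ≠ 0) {t : L} (ht : t ^ 2 = -3) :
    IsPrimitiveRoot ((1 + t) / 2) 6 := by
  have h2 : (2 : L) ≠ 0 := fun h ↦ h6 (by linear_combination 3 * h)
  have : NeZero ((6 : ℕ) : L) := ⟨by exact_mod_cast h6⟩
  rw [← isRoot_cyclotomic_iff, cyclotomic_six, IsRoot.def]
  simp only [eval_add, eval_sub, eval_pow, eval_X, eval_one]
  field_simp
  linear_combination ht

theorem mem_of_pow_six_eq_pow_six {S : Type*} [SetLike S L] [SubfieldClass S L] {E : S}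
    (h6 : (6 : L) ≠ 0) {t u x : L} (ht : t ^ 2 = -3) (htE : t ∈ E) (huE : u ∈ E)
    (hx : x ^ 6 = u ^ 6) : x ∈ E := by
  obtain rfl | hu := eq_or_ne u 0
  · have hx0 : x = 0 := by simpa using hx
    exact hx0 ▸ huE
  have hone : (x / u) ^ 6 = 1 := by rw [div_pow, hx, div_self (pow_ne_zero 6 hu)]
  obtain ⟨i, -, hi⟩ := (isPrimitiveRoot_six_of_sq_eq_neg_three h6 ht).eq_pow_of_pow_eq_one hone
  have hωE : (1 + t) / 2 ∈ E := div_mem (add_mem (one_mem E) htE) (natCast_mem E 2)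
  have hx' : x = ((1 + t) / 2) ^ i * u := by rw [hi, div_mul_cancel₀ x hu]
  exact hx' ▸ mul_mem (pow_mem hωE i) huE

theorem exists_sq_eq_neg_three_of_splits {θ : L} (hθ : θ ≠ 0)
    (h : (X ^ 6 - C (θ ^ 6) : L[X]).Splits) : ∃ t : L, t ^ 2 = -3 := by
  have hdvd : X ^ 2 - C θ * X + C (θ ^ 2) ∣ (X ^ 6 - C (θ ^ 6) : L[X]) :=
    ⟨(X + C θ) * (X ^ 3 - C (θ ^ 3)), by simp only [map_pow]; ring⟩
  have hdeg : (X ^ 2 - C θ * X + C (θ ^ 2) : L[X]).degree = 2 := by compute_degree!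
  obtain ⟨ρ, hρ⟩ := (h.of_dvd (X_pow_sub_C_ne_zero (by norm_num) _) hdvd).exists_eval_eq_zero
    (by rw [hdeg]; norm_num)
  refine ⟨2 * (ρ / θ) - 1, ?_⟩
  simp only [eval_add, eval_sub, eval_mul, eval_pow, eval_X, eval_C] at hρ
  field_simp
  linear_combination 4 * hρ

theorem mem_of_sextic_quadratic_root {S : Type*} [SetLike S L] [SubfieldClass S L] {E : S}
    (h6 : (6 : L) ≠ 0) {A B θ x g s t : L} (hB : B ≠ 0)
    (hθ : (θ ^ 6) ^ 2 + A * θ ^ 6 + B = 0) (hx : (x ^ 6) ^ 2 + A * x ^ 6 + B = 0)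
    (hg : g ^ 3 = B) (hs : s ^ 2 = B) (ht : t ^ 2 = -3)
    (hθE : θ ∈ E) (hgE : g ∈ E) (hsE : s ∈ E) (htE : t ∈ E) : x ∈ E := by
  have hcases : (x ^ 6 - θ ^ 6) * (x ^ 6 + θ ^ 6 + A) = 0 := by linear_combination hx - hθ
  obtain hsame | hconj := mul_eq_zero.1 hcases
  · exact mem_of_pow_six_eq_pow_six h6 ht htE hθE (sub_eq_zero.1 hsame)
  · have hθ0 : θ ≠ 0 := by
      rintro rfl
      exact hB (by simpa using hθ)
    have hprod : θ ^ 6 * x ^ 6 = B := by linear_combination θ ^ 6 * hconj - hθ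
    have hs6 : s ^ 6 = B ^ 3 := by rw [← hs]; ring
    have hg6 : g ^ 6 = B ^ 2 := by rw [← hg]; ring
    have hxs : x ^ 6 = (s / (θ * g)) ^ 6 := by
      rw [div_pow, mul_pow, hs6, hg6]
      field_simp
      linear_combination hprod
    exact mem_of_pow_six_eq_pow_six h6 ht htE (div_mem hsE (mul_mem hθE hgE)) hxs

end SixthRoots

theorem exists_pow_eq_of_splits {L : Type*} [Field L] {n : ℕ} (hn : n ≠ 0) {c : L}
    (h : (X ^ n - C c).Splits) : ∃ x, x ^ n = c := by
  obtain ⟨x, hx⟩ := h.exists_eval_eq_zero (by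
    rw [degree_X_pow_sub_C (Nat.pos_of_ne_zero hn)]; exact_mod_cast hn)
  exact ⟨x, by simpa [sub_eq_zero] using hx⟩

section Tower

variable {F M L : Type*} [Field F] [Field M] [Field L] [Algebra F M] [Algebra F L] {a b : F}

theorem aeval_expand_quadratic (n : ℕ) (x : L) :
    aeval x (expand F n (X ^ 2 + C a * X + C b)) =
      (x ^ n) ^ 2 + algebraMap F L a * x ^ n + algebraMap F L b := by
  simp

theorem map_expand_quadratic_eq_mul {n : ℕ} {θ : L}
    (hθ : aeval θ (expand F n (X ^ 2 + C a * X + C b)) = 0) :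
    (expand F n (X ^ 2 + C a * X + C b)).map (algebraMap F L) =
      (X ^ n - C (θ ^ n)) * (X ^ n - C (-algebraMap F L a - θ ^ n)) := by
  rw [aeval_expand_quadratic] at hθ
  have hb : algebraMap F L b = -(θ ^ n) ^ 2 - algebraMap F L a * θ ^ n := by
    linear_combination hθ
  simp only [Polynomial.map_add, Polynomial.map_mul, Polynomial.map_pow, map_X, map_C,
    hb, map_add, map_mul, map_pow, map_sub, map_neg, expand_X, expand_C]
  ring

theorem exists_pow_three_eq_algebraMap {θ : M}
    (hθ : aeval θ (expand F 6 (X ^ 2 + C a * X + C b)) = 0) (hb : ¬IsSquare b)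
    (hcr : (∃ c : F, c ^ 3 = b) ∨ ∃ r : F, r ^ 3 - 3 * b * r + a * b = 0) :
    ∃ γ : M, γ ^ 3 = algebraMap F M b := by
  obtain ⟨c, rfl⟩ | ⟨r, hr⟩ := hcr
  · exact ⟨algebraMap F M c, (map_pow _ _ _).symm⟩
  rw [aeval_expand_quadratic] at hθ
  have hθ0 : θ ≠ 0 := by
    rintro rfl
    exact hb (by simp_all)
  have hrb : r ^ 2 - b ≠ 0 := fun h ↦ hb ⟨r, by linear_combination -h⟩
  have hrM := congrArg (algebraMap F M) hr
  have hrbM := (_root_.map_ne_zero (algebraMap F M)).2 hrb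
  simp only [map_add, map_sub, map_mul, map_pow, map_ofNat, map_zero] at hrM hrbM
  obtain ⟨x, hx⟩ := exists_pow_three_eq_mul_of_cubic_resolvent hrM hrbM hθ
  refine ⟨x / θ ^ 2, ?_⟩
  rw [div_pow, hx]
  field_simp

variable [Algebra M L] [IsScalarTower F M L]

theorem adjoin_sqrt_pair_eq_top [IsSplittingField F L (expand F 6 (X ^ 2 + C a * X + C b))]
    (h6 : (6 : L) ≠ 0) (hb : b ≠ 0) {θ γ : M} {s t : L}
    (hθ : aeval θ (expand F 6 (X ^ 2 + C a * X + C b)) = 0)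
    (hγ : γ ^ 3 = algebraMap F M b) (hs : s ^ 2 = algebraMap F L b) (ht : t ^ 2 = -3) :
    M⟮s, t⟯ = ⊤ := by
  have hγL : algebraMap M L γ ^ 3 = algebraMap F L b := by
    rw [← map_pow, hγ, ← IsScalarTower.algebraMap_apply]
  have hθL : aeval (algebraMap M L θ) (expand F 6 (X ^ 2 + C a * X + C b)) = 0 := by
    rw [aeval_algebraMap_apply, hθ, map_zero]
  have hroots : (expand F 6 (X ^ 2 + C a * X + C b)).rootSet L ⊆ M⟮s, t⟯ := fun x hx ↦ by
    have hx0 := aeval_eq_zero_of_mem_rootSet hx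
    rw [aeval_expand_quadratic] at hθL hx0
    exact mem_of_sextic_quadratic_root h6 ((_root_.map_ne_zero _).2 hb) hθL hx0 hγL hs ht
      (M⟮s, t⟯.algebraMap_mem θ) (M⟮s, t⟯.algebraMap_mem γ)
      (mem_adjoin_pair_left M s t) (mem_adjoin_pair_right M s t)
  have hle : Algebra.adjoin F ((expand F 6 (X ^ 2 + C a * X + C b)).rootSet L) ≤
      (M⟮s, t⟯.restrictScalars F).toSubalgebra := Algebra.adjoin_le hroots
  rw [IsSplittingField.adjoin_rootSet] at hle
  exact eq_top_iff.2 fun x _ ↦ hle Algebra.mem_top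

end Tower

section SplittingField

variable {F : Type*} [Field F] {a b : F}

theorem twelve_ne_zero_of_not_isSquare_neg_three (h3 : ¬IsSquare (-3 : F)) : (12 : F) ≠ 0 :=
  fun h ↦ h3 ⟨3, by linear_combination -h⟩

theorem separable_of_irreducible_of_natDegree_ne_zero {f : F[X]} (hirr : Irreducible f)
    (hdeg : (f.natDegree : F) ≠ 0) : f.Separable := by
  refine (separable_iff_derivative_ne_zero hirr).2 fun h ↦ hdeg ?_
  have hpos : 1 ≤ f.natDegree := hirr.natDegree_pos
  have hcoeff : f.leadingCoeff * f.natDegree = 0 := by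
    have := congrArg (coeff · (f.natDegree - 1)) h
    simp only [coeff_derivative, Nat.sub_add_cancel hpos, coeff_zero] at this
    rwa [← Nat.cast_add_one, Nat.sub_add_cancel hpos] at this
  exact (mul_eq_zero.1 hcoeff).resolve_left (leadingCoeff_ne_zero.2 hirr.ne_zero)

theorem exists_sqrts_of_splits {L : Type*} [Field L] [Algebra F L] (hb : b ≠ 0) {θ : L}
    (hθ : aeval θ (expand F 6 (X ^ 2 + C a * X + C b)) = 0)
    (hsplit : ((expand F 6 (X ^ 2 + C a * X + C b)).map (algebraMap F L)).Splits) :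
    (∃ s : L, s ^ 2 = algebraMap F L b) ∧ ∃ t : L, t ^ 2 = -3 := by
  rw [map_expand_quadratic_eq_mul hθ] at hsplit
  have hne (c : L) : (X ^ 6 - C c : L[X]) ≠ 0 := X_pow_sub_C_ne_zero (by norm_num) c
  have hprod := mul_ne_zero (hne (θ ^ 6)) (hne (-algebraMap F L a - θ ^ 6))
  rw [aeval_expand_quadratic] at hθ
  have hθ0 : θ ≠ 0 := by
    rintro rfl
    exact hb (by simpa using hθ)
  obtain ⟨φ, hφ⟩ := exists_pow_eq_of_splits (by norm_num)
    (hsplit.of_dvd hprod (dvd_mul_left _ _))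
  exact ⟨⟨(θ * φ) ^ 3, by linear_combination θ ^ 6 * hφ - hθ⟩,
    exists_sq_eq_neg_three_of_splits hθ0 (hsplit.of_dvd hprod (dvd_mul_right _ _))⟩

theorem finrank_eq_four_of_isSplittingField {M L : Type*} [Field M] [Field L] [Algebra F M]
    [Algebra F L] [Algebra M L] [IsScalarTower F M L]
    [IsSplittingField F L (expand F 6 (X ^ 2 + C a * X + C b))]
    (hirr : Irreducible (expand F 6 (X ^ 2 + C a * X + C b))) {θ : M}
    (hθ : aeval θ (expand F 6 (X ^ 2 + C a * X + C b)) = 0) (htop : F⟮θ⟯ = ⊤)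
    (h3 : ¬IsSquare (-3 : F)) (hb : ¬IsSquare b)
    (hbd : ¬IsSquare (b * (a ^ 2 - 4 * b)))
    (hd : ¬IsSquare (3 * (4 * b - a ^ 2)))
    (h3b : ¬IsSquare (-3 * b))
    (h3bd : ¬IsSquare (3 * b * (4 * b - a ^ 2)))
    (hcr : (∃ c : F, c ^ 3 = b) ∨ ∃ r : F, r ^ 3 - 3 * b * r + a * b = 0) :
    Module.finrank M L = 4 := by
  have h12 : (12 : L) ≠ 0 := by
    simpa only [map_ofNat] using
      (_root_.map_ne_zero (algebraMap F L)).2 (twelve_ne_zero_of_not_isSquare_neg_three h3)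
  have h6 : (6 : L) ≠ 0 := fun h ↦ h12 (by linear_combination 2 * h)
  have h2L : (2 : L) ≠ 0 := fun h ↦ h6 (by linear_combination 3 * h)
  have h2M : (2 : M) ≠ 0 := fun h ↦ h2L (by
    simpa only [map_ofNat, map_zero] using congrArg (algebraMap M L) h)
  have hb0 : b ≠ 0 := fun h ↦ hb (h ▸ IsSquare.zero)
  have hθL : aeval (algebraMap M L θ) (expand F 6 (X ^ 2 + C a * X + C b)) = 0 := by
    rw [aeval_algebraMap_apply, hθ, map_zero]
  obtain ⟨⟨s, hs⟩, t, ht⟩ := exists_sqrts_of_splits hb0 hθL (IsSplittingField.splits L _)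
  obtain ⟨γ, hγ⟩ := exists_pow_three_eq_algebraMap hθ hb hcr
  have hsq {e : F} (he : ¬IsSquare e) (hed : ¬IsSquare (e * (a ^ 2 - 4 * b))) :
      ¬IsSquare (algebraMap F M e) := fun h ↦
    (isSquare_or_isSquare_mul_discrim_of_isSquare_algebraMap (n := 3) h2M (by decide) hirr hb hθ
      htop h).elim he hed
  rw [← finrank_top', ← adjoin_sqrt_pair_eq_top h6 hb0 hθ hγ hs ht]
  refine finrank_adjoin_sqrt_pair (c := algebraMap F M b) (d := algebraMap F M (-3)) h2L
    (by rw [hs, ← IsScalarTower.algebraMap_apply]) (by simp only [ht, map_neg, map_ofNat])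
    (hsq hb hbd) (hsq h3 ?_) ?_
  · convert hd using 2; ring
  · rw [← map_mul]
    refine hsq h3b ?_
    convert h3bd using 2; ring

end SplittingField

theorem aeval_adjoinSimple_gen {F L : Type*} [Field F] [Field L] [Algebra F L] {p : F[X]} {θ : L}
    (hθ : aeval θ p = 0) : aeval (AdjoinSimple.gen F θ) p = 0 :=
  Subtype.ext (by rw [AdjoinSimple.coe_aeval_gen_apply, hθ, ZeroMemClass.coe_zero])

theorem adjoin_adjoinSimple_gen {F L : Type*} [Field F] [Field L] [Algebra F L] (θ : L) :
    F⟮AdjoinSimple.gen F θ⟯ = ⊤ := by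
  apply lift_injective
  rw [lift_adjoin_simple, lift_top, AdjoinSimple.coe_gen]

theorem gal_order_fortyeight_of_12T28_general {F : Type*} [Field F] (a b : F) (f : F[X])
    (h3 : ¬IsSquare (-3 : F))
    (hf : f = X ^ 12 + C a * X ^ 6 + C b) (hirr : Irreducible f)
    (hb : ¬IsSquare b) (hbd : ¬IsSquare (b * (a ^ 2 - 4 * b)))
    (hd : ¬IsSquare (3 * (4 * b - a ^ 2))) (h3b : ¬IsSquare (-3 * b))
    (h3bd : ¬IsSquare (3 * b * (4 * b - a ^ 2)))
    (hcr : (∃ c : F, c ^ 3 = b) ∨ ∃ r : F, r ^ 3 - 3 * b * r + a * b = 0) :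
    Nat.card f.Gal = 48 := by
  have hexp : f = expand F 6 (X ^ 2 + C a * X + C b) := by
    simp only [hf, map_add, map_mul, map_pow, expand_X, expand_C, ← pow_mul]
  have hdeg : f.natDegree = 12 := by rw [hf]; compute_degree!
  have hsep : f.Separable := separable_of_irreducible_of_natDegree_ne_zero hirr (by
    rw [hdeg]; exact_mod_cast twelve_ne_zero_of_not_isSquare_neg_three h3)
  obtain ⟨θ, hθ⟩ : ∃ θ : f.SplittingField, aeval θ f = 0 := by
    simpa only [eval_map_algebraMap] using (SplittingField.splits f).exists_eval_eq_zero (by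
      rw [degree_map]; exact hirr.degree_pos.ne')
  have hM : Module.finrank F F⟮θ⟯ = 12 := by
    rw [finrank_adjoin_simple_of_irreducible hirr hθ, hdeg]
  have hL : Module.finrank F⟮θ⟯ f.SplittingField = 4 := by
    subst hexp
    exact finrank_eq_four_of_isSplittingField hirr (aeval_adjoinSimple_gen hθ)
      (adjoin_adjoinSimple_gen θ) h3 hb hbd hd h3b h3bd hcr
  rw [Gal.card_of_separable hsep, ← Module.finrank_mul_finrank F F⟮θ⟯, hM, hL]

theorem gal_order_fortyeight_of_12T28 (a b : ℚ) (f : ℚ[X])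
    (hf : f = X ^ 12 + C a * X ^ 6 + C b) (hirr : Irreducible f)
    (hb_nsq : ¬ ∃ s : ℚ, s ^ 2 = b)
    (hbd : ¬ ∃ s : ℚ, s ^ 2 = b * (a ^ 2 - 4 * b))
    (hd : ¬ ∃ s : ℚ, s ^ 2 = 3 * (4 * b - a ^ 2))
    (h3b : ¬ ∃ s : ℚ, s ^ 2 = -3 * b)
    (h3bd : ¬ ∃ s : ℚ, s ^ 2 = 3 * b * (4 * b - a ^ 2))
    (hcr : (∃ c : ℚ, c ^ 3 = b) ∨ ∃ r : ℚ, r ^ 3 - 3 * b * r + a * b = 0) :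
    Nat.card f.Gal = 48 := by
  simp only [← isSquare_iff_exists_sq_eq] at hb_nsq hbd hd h3b h3bd
  exact gal_order_fortyeight_of_12T28_general a b f (fun h ↦ by linarith [h.nonneg]) hf hirr
    hb_nsq hbd hd h3b h3bd hcr
end

section
/- Let a, b ∈ ℚ and suppose f(x) = x^12 + a·x^6 + b is irreducible over ℚ. Assume: b is not a square in ℚ; b·(a^2 − 4b) is not a square in ℚ; 3·(4b − a^2) is not a square in ℚ; −3b is not a square in ℚ; 3b·(4b − a^2) is not a square in ℚ; b is not a cube in ℚ; and the cubic x^3 − 3·b·x + a·b has no rational root. Then the Galois group of f over ℚ has order 144. -/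
open Polynomial

/-!
Let `t = α ^ 6` for a root `α` of the trinomial, so that `t` is quadratic over `K` with norm `b` and
trace `-a`. The product of `α` with a sixth root of the conjugate of `t` is a sixth root of `b`, so
over `M = K(t, √-3)`, which contains the sixth roots of unity, the splitting field is generated by
sixth roots of `b` and `t`. It has degree `6 ^ 2` over `M` by Kummer theory, once `b` and
`b ^ i * t` are known to be neither squares nor cubes in `M`. Each such statement descends to `K`:
squares in a quadratic extension `K(√c)` that come from `K` are squares in `K` up to a factor `c`,
and otherwise one takes norms. Only `b * t` being a cube escapes this, and there the trace of a
cube root is a root of the cubic `x ^ 3 - 3 * b * x + a * b`.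
-/

open IntermediateField Module

section Kummer

variable {K L : Type*} [Field K] [Field L] [Algebra K L]

theorem notMem_bot_of_pow_eq {n : ℕ} {c : K} (hc : ∀ z : K, z ^ n ≠ c) {x : L}
    (hx : x ^ n = algebraMap K L c) : x ∉ (⊥ : IntermediateField K L) := by
  rintro ⟨z, rfl⟩
  exact hc z ((algebraMap K L).injective (by rw [map_pow]; exact hx))

theorem finrank_adjoin_simple_of_pow_eq {p : ℕ} (hp : p.Prime) {c : K} (hc : ∀ z : K, z ^ p ≠ c)
    {x : L} (hx : x ^ p = algebraMap K L c) : finrank K K⟮x⟯ = p := by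
  have hmonic := monic_X_pow_sub_C c hp.ne_zero
  have hroot : aeval x (X ^ p - C c) = 0 := by simp [hx]
  rw [adjoin.finrank ⟨_, hmonic, hroot⟩, ← minpoly.eq_of_irreducible_of_monic
    (X_pow_sub_C_irreducible_of_prime hp hc) hroot hmonic, natDegree_X_pow_sub_C]

theorem mem_bot_of_map_eq_self (hL : (finrank K L).Prime) {σ : L →ₐ[K] L} (hσ : σ ≠ AlgHom.id K L)
    {z : L} (hz : σ z = z) : z ∈ (⊥ : IntermediateField K L) := by
  have := Subalgebra.isSimpleOrder_of_finrank_prime K L hL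
  have hbot : AlgHom.equalizer σ (AlgHom.id K L) = ⊥ :=
    (eq_bot_or_eq_top _).resolve_right fun h ↦ hσ ((AlgHom.equalizer_eq_top).1 h)
  have hmem : z ∈ AlgHom.equalizer σ (AlgHom.id K L) := hz
  rwa [hbot] at hmem

theorem exists_pow_eq_pow_mul_of_pow_eq {p : ℕ} (hp : p.Prime) {ζ : K}
    (hζ : IsPrimitiveRoot ζ p) (hL : finrank K L = p) {c d : K} {x y : L}
    (hx : x ^ p = algebraMap K L c) (hxK : x ∉ (⊥ : IntermediateField K L))
    (hy : y ^ p = algebraMap K L d) : ∃ i < p, ∃ z : K, z ^ p = c ^ i * d := by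
  rcases eq_or_ne y 0 with rfl | hy0
  · refine ⟨0, hp.pos, 0, ?_⟩
    rw [zero_pow hp.ne_zero, eq_comm, map_eq_zero] at hy
    simp [hy, hp.ne_zero]
  have : Fact p.Prime := ⟨hp⟩
  have : FiniteDimensional K L := .of_finrank_pos (hL ▸ hp.pos)
  have := isSimpleOrder_of_finrank_prime K L (hL ▸ hp)
  have hgen : K⟮x⟯ = ⊤ :=
    (eq_bot_or_eq_top K⟮x⟯).resolve_left fun h ↦ hxK (h ▸ mem_adjoin_simple_self K x)
  have hroots : (primitiveRoots (finrank K L) K).Nonempty :=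
    ⟨ζ, hL ▸ (mem_primitiveRoots hp.pos).2 hζ⟩
  have : IsGalois K L :=
    (((isCyclic_tfae K L hroots).out 0 2 rfl rfl).2 ⟨x, ⟨c, by rw [hL, hx]⟩, hgen⟩).1
  obtain ⟨σ, hσ⟩ : ∃ σ : Gal(L/K), σ x ≠ x := by
    simpa only [IsGalois.mem_bot_iff_fixed, not_forall] using hxK
  have hx0 : x ≠ 0 := by rintro rfl; exact hσ (map_zero σ)
  -- `x` and `y` are eigenvectors of `σ` whose eigenvalues are `p`-th roots of unity, that of `x`
  -- being primitive, so some `x ^ i * y` is fixed by `σ` and hence lies in `K`.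
  have hω : IsPrimitiveRoot (σ x / x) p := by
    refine IsPrimitiveRoot.iff_orderOf.2 (orderOf_eq_prime ?_ ?_)
    · rw [div_pow, ← map_pow, hx, AlgEquiv.commutes, ← hx, div_self (pow_ne_zero p hx0)]
    · rwa [ne_eq, div_eq_one_iff_eq hx0]
  have hσy0 : σ y ≠ 0 := by simpa using hy0
  obtain ⟨i, hi, hiy⟩ : ∃ i < p, (σ x / x) ^ i = y / σ y := hω.eq_pow_of_pow_eq_one <| by
    rw [div_pow, ← map_pow, hy, AlgEquiv.commutes, ← hy, div_self (pow_ne_zero p hy0)]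
  have hfixed : σ (x ^ i * y) = x ^ i * y := by
    rw [div_pow, div_eq_div_iff (pow_ne_zero i hx0) hσy0] at hiy
    rw [map_mul, map_pow, hiy, mul_comm]
  obtain ⟨z, hz⟩ := mem_bot.1 <| mem_bot_of_map_eq_self (hL ▸ hp) (σ := σ)
    (fun h ↦ hσ (DFunLike.congr_fun h x)) hfixed
  refine ⟨i, hi, z, (algebraMap K L).injective ?_⟩
  rw [map_pow, hz, map_mul, map_pow, ← hx, ← hy]
  ring

theorem sq_ne_algebraMap_of_finrank_eq_two (h2 : (2 : K) ≠ 0) (hL : finrank K L = 2) {c d : K}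
    {x : L} (hx : x ^ 2 = algebraMap K L c) (hxK : x ∉ (⊥ : IntermediateField K L))
    (hd : ∀ z : K, z ^ 2 ≠ d) (hcd : ∀ z : K, z ^ 2 ≠ c * d) (y : L) :
    y ^ 2 ≠ algebraMap K L d := by
  intro hy
  have hζ : IsPrimitiveRoot (-1 : K) 2 := by
    refine IsPrimitiveRoot.iff_orderOf.2 (orderOf_eq_prime (by ring) fun h ↦ h2 ?_)
    linear_combination -h
  obtain ⟨i, hi, z, hz⟩ := exists_pow_eq_pow_mul_of_pow_eq Nat.prime_two hζ hL hx hxK hy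
  interval_cases i
  · exact hd z (by simpa using hz)
  · exact hcd z (by simpa using hz)

theorem pow_ne_algebraMap_of_coprime_finrank {n : ℕ} (hn : (finrank K L).Coprime n) {d : K}
    (hd : ∀ z : K, z ^ n ≠ d) (y : L) : y ^ n ≠ algebraMap K L d := by
  intro hy
  obtain ⟨z, hz⟩ := (pow_mem_range_pow_of_coprime hn d).1
    ⟨Algebra.norm K y, by simp only [← map_pow, hy, Algebra.norm_algebraMap]⟩
  exact hd z hz

theorem sq_dvd_finrank_of_pow_eq {p : ℕ} (hp : p.Prime) {ζ : K} (hζ : IsPrimitiveRoot ζ p)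
    {c d : K} {x y : L} (hx : x ^ p = algebraMap K L c) (hy : y ^ p = algebraMap K L d)
    (hc : ∀ z : K, z ^ p ≠ c) (hd : ∀ i < p, ∀ z : K, z ^ p ≠ c ^ i * d) :
    p ^ 2 ∣ finrank K L := by
  have hKx := finrank_adjoin_simple_of_pow_eq hp hc hx
  have hgen : AdjoinSimple.gen K x ^ p = algebraMap K K⟮x⟯ c := Subtype.ext hx
  have hdx (z : K⟮x⟯) : z ^ p ≠ algebraMap K K⟮x⟯ d := fun hz ↦
    have ⟨i, hi, w, hw⟩ := exists_pow_eq_pow_mul_of_pow_eq hp hζ hKx hgen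
      (notMem_bot_of_pow_eq hc hgen) hz
    hd i hi w hw
  have hKxy : finrank K⟮x⟯ K⟮x⟯⟮y⟯ = p := finrank_adjoin_simple_of_pow_eq hp hdx hy
  rw [← finrank_mul_finrank K K⟮x⟯ L, ← finrank_mul_finrank K⟮x⟯ K⟮x⟯⟮y⟯ L, hKx, hKxy,
    ← mul_assoc, sq]
  exact dvd_mul_right _ _

theorem finrank_adjoin_simple_le_of_pow_eq {n : ℕ} (hn : n ≠ 0) {c : K} {x : L}
    (hx : x ^ n = algebraMap K L c) : finrank K K⟮x⟯ ≤ n := by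
  have hmonic := monic_X_pow_sub_C c hn
  have hroot : aeval x (X ^ n - C c) = 0 := by simp [hx]
  rw [adjoin.finrank ⟨_, hmonic, hroot⟩]
  simpa using natDegree_le_of_dvd (minpoly.dvd K x hroot) hmonic.ne_zero

theorem finrank_eq_sq_of_squarefree {n : ℕ} (hn : Squarefree n) {ζ : K}
    (hζ : IsPrimitiveRoot ζ n) {c d : K} {x y : L} (hx : x ^ n = algebraMap K L c)
    (hy : y ^ n = algebraMap K L d) (htop : K⟮x, y⟯ = ⊤)
    (hc : ∀ p, p.Prime → p ∣ n → ∀ z : K, z ^ p ≠ c)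
    (hd : ∀ p, p.Prime → p ∣ n → ∀ i < p, ∀ z : K, z ^ p ≠ c ^ i * d) :
    finrank K L = n ^ 2 := by
  have hsup : K⟮x⟯ ⊔ K⟮y⟯ = ⊤ := by rw [← htop, ← adjoin_union]; rfl
  have hle : finrank K L ≤ n ^ 2 := calc
    finrank K L = finrank K ↥(K⟮x⟯ ⊔ K⟮y⟯) := by rw [hsup, finrank_top']
    _ ≤ finrank K K⟮x⟯ * finrank K K⟮y⟯ := finrank_sup_le ..
    _ ≤ n * n := Nat.mul_le_mul (finrank_adjoin_simple_le_of_pow_eq hn.ne_zero hx)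
      (finrank_adjoin_simple_le_of_pow_eq hn.ne_zero hy)
    _ = n ^ 2 := (sq n).symm
  have hdvd : n ^ 2 ∣ finrank K L := by
    rw [← Nat.prod_primeFactors_of_squarefree hn, ← Finset.prod_pow]
    refine Finset.prod_dvd_of_isRelPrime (fun p hp q hq hpq ↦ ?_) fun p hp ↦ ?_
    · exact Nat.coprime_iff_isRelPrime.1 (Nat.coprime_pow_primes 2 2
        (Nat.prime_of_mem_primeFactors hp) (Nat.prime_of_mem_primeFactors hq) hpq)
    · obtain ⟨m, rfl⟩ := Nat.dvd_of_mem_primeFactors hp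
      have hp := Nat.prime_of_mem_primeFactors hp
      have hζp : IsPrimitiveRoot (ζ ^ m) p := hζ.pow hn.ne_zero.pos (mul_comm p m)
      exact sq_dvd_finrank_of_pow_eq hp hζp (x := x ^ m) (y := y ^ m)
        (by rw [← pow_mul', hx]) (by rw [← pow_mul', hy]) (hc p hp ⟨m, rfl⟩) (hd p hp ⟨m, rfl⟩)
  have hpos : 0 < finrank K L := by
    have hint {z : L} {e : K} (hz : z ^ n = algebraMap K L e) : IsIntegral K z :=
      .of_pow hn.ne_zero.pos (hz ▸ isIntegral_algebraMap)
    have : FiniteDimensional K K⟮x, y⟯ := finiteDimensional_adjoin <| by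
      rintro z (rfl | rfl)
      exacts [hint hx, hint hy]
    rw [← finrank_top', ← htop]
    exact finrank_pos
  exact hle.antisymm (Nat.le_of_dvd hpos hdvd)

end Kummer

theorem six_ne_zero_of_forall_sq_ne {K : Type*} [Field K] (h3 : ∀ z : K, z ^ 2 ≠ -3) :
    (6 : K) ≠ 0 := by
  intro h6
  have h23 : (2 : K) * 3 = 0 := by linear_combination h6
  rcases mul_eq_zero.1 h23 with h | h
  · exact h3 1 (by linear_combination 2 * h)
  · exact h3 0 (by linear_combination h)

theorem isPrimitiveRoot_six_iff {K : Type*} [Field K] (h6 : (6 : K) ≠ 0) {ζ : K} :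
    IsPrimitiveRoot ζ 6 ↔ (2 * ζ - 1) ^ 2 = -3 := by
  have : NeZero ((6 : ℕ) : K) := ⟨mod_cast h6⟩
  have h2 : (2 : K) ≠ 0 := fun h ↦ h6 (by linear_combination 3 * h)
  rw [← isRoot_cyclotomic_iff, cyclotomic_six, IsRoot.def, ← mul_right_inj' (pow_ne_zero 2 h2)]
  simp only [eval_add, eval_sub, eval_pow, eval_X, eval_one]
  constructor <;> intro h <;> linear_combination h

theorem cube_injective_of_forall_sq_ne {K : Type*} [Field K] (h3 : ∀ z : K, z ^ 2 ≠ -3) :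
    Function.Injective fun z : K ↦ z ^ 3 := by
  intro x y hxy
  have hfac : (x - y) * (x ^ 2 + x * y + y ^ 2) = 0 := by linear_combination hxy
  rcases mul_eq_zero.1 hfac with h | h
  · exact sub_eq_zero.1 h
  rcases eq_or_ne y 0 with rfl | hy
  · simpa using h
  · refine absurd ?_ (h3 ((2 * x + y) / y))
    field_simp
    linear_combination 4 * h

section Quadratic

variable {K L : Type*} [Field K] [Field L] [Algebra K L]

theorem sq_eq_trace_mul_sub_norm (hL : finrank K L = 2) (y : L) :
    y ^ 2 = algebraMap K L (Algebra.trace K L y) * y - algebraMap K L (Algebra.norm K y) := by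
  have : FiniteDimensional K L := .of_finrank_pos (by simp [hL])
  let e := finBasisOfFinrankEq K L hL
  apply Algebra.leftMulMatrix_injective e
  have h := (Algebra.leftMulMatrix e y).aeval_self_charpoly
  rw [Matrix.charpoly_fin_two] at h
  rw [Algebra.trace_eq_matrix_trace e, Algebra.norm_eq_matrix_det e]
  simp only [map_sub, map_add, map_mul, map_pow, aeval_X, aeval_C, AlgHom.commutes] at h ⊢
  rw [← sub_eq_zero, ← h]
  abel

theorem norm_algebraMap_mul_of_finrank_eq_two (hL : finrank K L = 2) (u : K) (t : L) :
    Algebra.norm K (algebraMap K L u * t) = u ^ 2 * Algebra.norm K t := by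
  rw [map_mul, Algebra.norm_algebraMap, hL]

theorem sq_ne_algebraMap_mul (hL : finrank K L = 2) {t : L}
    (ht : ∀ z : K, z ^ 2 ≠ Algebra.norm K t) {u : K} (hu : u ≠ 0) (y : L) :
    y ^ 2 ≠ algebraMap K L u * t := by
  intro hy
  refine ht (Algebra.norm K y / u) ?_
  rw [div_pow, ← map_pow, hy, norm_algebraMap_mul_of_finrank_eq_two hL,
    mul_div_cancel_left₀ _ (pow_ne_zero 2 hu)]

theorem cube_ne_norm_mul (h3 : ∀ z : K, z ^ 2 ≠ -3) (hL : finrank K L = 2) {t : L}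
    (ht : ∀ z : K, z ^ 3 - 3 * Algebra.norm K t * z ≠ Algebra.norm K t * Algebra.trace K L t)
    (y : L) : y ^ 3 ≠ algebraMap K L (Algebra.norm K t) * t := by
  intro hy
  have hnorm : Algebra.norm K y = Algebra.norm K t := by
    refine cube_injective_of_forall_sq_ne h3 (?_ : Algebra.norm K y ^ 3 = Algebra.norm K t ^ 3)
    rw [← map_pow, hy, norm_algebraMap_mul_of_finrank_eq_two hL, ← pow_succ]
  -- Reducing `y ^ 3 = b * t` modulo `y ^ 2 = r * y - b` leaves a linear relation between `y` and
  -- `t`, whose trace is the cubic equation for `r`.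
  have hsq := sq_eq_trace_mul_sub_norm hL y
  rw [hnorm] at hsq
  set b := Algebra.norm K t
  set r := Algebra.trace K L y
  have hlin : (r ^ 2 - b) • y - algebraMap K L (r * b) = b • t := by
    simp only [Algebra.smul_def, map_sub, map_mul, map_pow]
    linear_combination hy - (y + algebraMap K L r) * hsq
  have htrace := congrArg (Algebra.trace K L) hlin
  simp only [map_sub, map_smul, Algebra.trace_algebraMap, hL, smul_eq_mul, nsmul_eq_mul] at htrace
  refine ht r ?_
  push_cast at htrace
  linear_combination htrace

theorem cube_ne_pow_norm_mul (h3 : ∀ z : K, z ^ 2 ≠ -3) (hL : finrank K L = 2) {t : L}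
    (hnorm : ∀ z : K, z ^ 3 ≠ Algebra.norm K t)
    (hcubic : ∀ z : K, z ^ 3 - 3 * Algebra.norm K t * z ≠ Algebra.norm K t * Algebra.trace K L t)
    {i : ℕ} (hi : i < 3) (y : L) : y ^ 3 ≠ algebraMap K L (Algebra.norm K t) ^ i * t := by
  intro hy
  have hcube (hcop : (2 * i + 1).Coprime 3) : False := by
    have hN : Algebra.norm K y ^ 3 = Algebra.norm K t ^ (2 * i + 1) := by
      rw [← map_pow (Algebra.norm K) y, hy, ← map_pow (algebraMap K L),
        norm_algebraMap_mul_of_finrank_eq_two hL]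
      ring
    obtain ⟨z, hz⟩ := (pow_mem_range_pow_of_coprime hcop _).1 ⟨_, hN⟩
    exact hnorm z hz
  interval_cases i
  · exact hcube (by norm_num)
  · exact cube_ne_norm_mul h3 hL hcubic y (by rwa [pow_one] at hy)
  · exact hcube (by norm_num)

theorem sq_ne_algebraMap_of_norm_eq (h2 : (2 : K) ≠ 0) (hL : finrank K L = 2) {t : L}
    (ht : ∀ z : K, z ^ 2 ≠ Algebra.norm K t) {d : K} (hd : ∀ z : K, z ^ 2 ≠ d)
    (hdisc : ∀ z : K, z ^ 2 ≠ (Algebra.trace K L t ^ 2 - 4 * Algebra.norm K t) * d) (y : L) :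
    y ^ 2 ≠ algebraMap K L d := by
  have hx : (2 * t - algebraMap K L (Algebra.trace K L t)) ^ 2 =
      algebraMap K L (Algebra.trace K L t ^ 2 - 4 * Algebra.norm K t) := by
    simp only [map_sub, map_mul, map_pow, map_ofNat]
    linear_combination 4 * sq_eq_trace_mul_sub_norm hL t
  refine sq_ne_algebraMap_of_finrank_eq_two h2 hL hx ?_ hd hdisc y
  rintro ⟨z, hz⟩
  have hz : algebraMap K L z = 2 * t - algebraMap K L (Algebra.trace K L t) := hz
  have htK : algebraMap K L ((z + Algebra.trace K L t) / 2) = t := by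
    rw [map_div₀, map_add, map_ofNat, hz, sub_add_cancel, mul_div_cancel_left₀]
    exact map_ofNat (algebraMap K L) 2 ▸ (_root_.map_ne_zero (algebraMap K L)).2 h2
  exact ht ((z + Algebra.trace K L t) / 2) (by rw [← htK, Algebra.norm_algebraMap, hL, htK])

end Quadratic

section Trinomial

theorem separable_X_pow_two_mul_add {K : Type*} [Field K] {n : ℕ} (hn : (n : K) ≠ 0) {a b : K}
    (hb : b ≠ 0) (hab : a ^ 2 - 4 * b ≠ 0) : (X ^ (2 * n) + C a * X ^ n + C b).Separable := by
  have hn1 : 1 ≤ n := Nat.one_le_iff_ne_zero.2 (by rintro rfl; simp at hn)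
  have hderiv : derivative (X ^ (2 * n) + C a * X ^ n + C b) =
      C (n : K) * X ^ (n - 1) * (2 * X ^ n + C a) := by
    have hexp : 2 * n - 1 = n - 1 + n := by omega
    simp only [derivative_add, derivative_X_pow, derivative_C_mul, derivative_C, hexp, pow_add,
      Nat.cast_mul, Nat.cast_ofNat, C_mul, C_ofNat]
    ring
  have hX : IsCoprime (X ^ (2 * n) + C a * X ^ n + C b) (X ^ n) :=
    ⟨C b⁻¹, -C b⁻¹ * (X ^ n + C a), by
      rw [← C_1, ← inv_mul_cancel₀ hb, C_mul]
      ring⟩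
  have hdisc : IsCoprime (X ^ (2 * n) + C a * X ^ n + C b) (2 * X ^ n + C a) :=
    ⟨-4 * C (a ^ 2 - 4 * b)⁻¹, C (a ^ 2 - 4 * b)⁻¹ * (2 * X ^ n + C a), by
      rw [← C_1, ← inv_mul_cancel₀ hab, C_mul]
      simp only [map_sub, map_mul, map_pow, map_ofNat]
      ring⟩
  have hunit : IsUnit (C (n : K)) := isUnit_C.2 hn.isUnit
  rw [separable_def, hderiv, mul_assoc, isCoprime_mul_unit_left_right hunit]
  exact (hX.of_isCoprime_of_dvd_right (pow_dvd_pow X (Nat.sub_le n 1))).mul_right hdisc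

variable {E : Type*} [Field E] {n : ℕ} {a b α : E}

theorem splits_X_pow_sub_C_of_splits (hn : n ≠ 0) (hα : α ^ (2 * n) + a * α ^ n + b = 0)
    (hsplits : (X ^ (2 * n) + C a * X ^ n + C b).Splits) :
    (X ^ n - C (α ^ n)).Splits ∧ (X ^ n - C (-a - α ^ n)).Splits := by
  have hne (c : E) : X ^ n - C c ≠ 0 := X_pow_sub_C_ne_zero hn.bot_lt c
  have hfactor : X ^ (2 * n) + C a * X ^ n + C b =
      (X ^ n - C (α ^ n)) * (X ^ n - C (-a - α ^ n)) := by
    rw [show b = -α ^ (2 * n) - a * α ^ n by linear_combination hα]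
    simp only [map_sub, map_mul, map_pow, map_neg]
    ring
  rw [hfactor] at hsplits
  have hne' := mul_ne_zero (hne (α ^ n)) (hne (-a - α ^ n))
  exact ⟨hsplits.of_dvd hne' (dvd_mul_right _ _), hsplits.of_dvd hne' (dvd_mul_left _ _)⟩

theorem exists_pow_eq_of_splits_s15 (hn : n ≠ 0) (hα : α ^ (2 * n) + a * α ^ n + b = 0)
    (hsplits : (X ^ (2 * n) + C a * X ^ n + C b).Splits) : ∃ γ : E, γ ^ n = b := by
  -- `α ^ n` and `β ^ n` are the two roots of `X ^ 2 + a * X + b`, whose product is `b`.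
  obtain ⟨β, hβ⟩ := (splits_X_pow_sub_C_of_splits hn hα hsplits).2.exists_eval_eq_zero <| by
    rw [degree_X_pow_sub_C hn.bot_lt]
    exact_mod_cast hn
  simp only [eval_sub, eval_pow, eval_X, eval_C] at hβ
  exact ⟨α * β, by linear_combination α ^ n * hβ - hα⟩

theorem exists_isPrimitiveRoot_of_splits (hn : (n : E) ≠ 0) (hα0 : α ≠ 0)
    (hα : α ^ (2 * n) + a * α ^ n + b = 0)
    (hsplits : (X ^ (2 * n) + C a * X ^ n + C b).Splits) : ∃ ζ : E, IsPrimitiveRoot ζ n := by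
  have : NeZero (n : E) := ⟨hn⟩
  have hn0 : n ≠ 0 := by rintro rfl; simp at hn
  have hunity : (X ^ n - 1 : E[X]).Splits := by
    have h := splits_X_pow_sub_one_of_X_pow_sub_C (RingHom.id E) n (pow_ne_zero n hα0)
    rw [Polynomial.map_id, Polynomial.map_id] at h
    exact h (splits_X_pow_sub_C_of_splits hn0 hα hsplits).1
  obtain ⟨ζ, hζ⟩ := (hunity.of_dvd (X_pow_sub_C_ne_zero hn0.bot_lt 1)
    (cyclotomic.dvd_X_pow_sub_one n E)).exists_eval_eq_zero
    (degree_cyclotomic_pos n E hn0.bot_lt).ne'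
  exact ⟨ζ, isRoot_cyclotomic_iff.1 hζ⟩

end Trinomial

theorem mem_of_pow_eq_pow {M E : Type*} [Field M] [Field E] [Algebra M E] {n : ℕ} [NeZero n]
    {ζ : M} (hζ : IsPrimitiveRoot ζ n) {F : IntermediateField M E} {y z : E} (hz : z ∈ F)
    (hyz : y ^ n = z ^ n) : y ∈ F := by
  rcases eq_or_ne z 0 with rfl | hz0
  · rw [zero_pow (NeZero.ne n)] at hyz
    rwa [eq_zero_of_pow_eq_zero hyz]
  have hζE := hζ.map_of_injective (algebraMap M E).injective
  obtain ⟨i, -, hi⟩ := hζE.eq_pow_of_pow_eq_one (ξ := y / z) <| by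
    rw [div_pow, hyz, div_self (pow_ne_zero n hz0)]
  rw [← div_mul_cancel₀ y hz0, ← hi, ← map_pow]
  exact mul_mem (IntermediateField.algebraMap_mem _ _) hz

theorem adjoin_eq_top_of_isSplittingField {K M E : Type*} [Field K] [Field M] [Field E]
    [Algebra K M] [Algebra M E] [Algebra K E] [IsScalarTower K M E] {n : ℕ} [NeZero n] {a b : K}
    [IsSplittingField K E (X ^ (2 * n) + C a * X ^ n + C b)] {ζ : M} (hζ : IsPrimitiveRoot ζ n)
    {α γ : E} (hα0 : α ≠ 0) (hα : aeval α (X ^ (2 * n) + C a * X ^ n + C b) = 0)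
    (hγ : γ ^ n = algebraMap K E b) : M⟮γ, α⟯ = ⊤ := by
  have hαmem : α ∈ M⟮γ, α⟯ := subset_adjoin M _ (by simp)
  have hγmem : γ ∈ M⟮γ, α⟯ := subset_adjoin M _ (by simp)
  have hroots : (X ^ (2 * n) + C a * X ^ n + C b).rootSet E ⊆
      (M⟮γ, α⟯.restrictScalars K : Set E) := by
    intro r hr
    have hr := aeval_eq_zero_of_mem_rootSet hr
    simp only [map_add, map_mul, map_pow, aeval_X, aeval_C, ← hγ] at hα hr
    have hfactor : (r ^ n - α ^ n) * (r ^ n * α ^ n - γ ^ n) = 0 := by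
      linear_combination α ^ n * hr - r ^ n * hα
    rcases mul_eq_zero.1 hfactor with h | h
    · exact mem_of_pow_eq_pow hζ hαmem (sub_eq_zero.1 h)
    · refine mem_of_pow_eq_pow hζ (div_mem hγmem hαmem) ?_
      rw [div_pow, eq_div_iff (pow_ne_zero n hα0), sub_eq_zero.1 h]
  rw [← restrictScalars_eq_top_iff (K := K), eq_top_iff,
    ← (isSplittingField_iff_intermediateField.1 ‹IsSplittingField K E _›).2]
  exact adjoin_le_iff.2 hroots

section QuadraticGenerator

variable {K L : Type*} [Field K] [Field L] [Algebra K L] {a b : K} {x : L}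

theorem isIntegral_of_minpoly_eq_quadratic (hx : minpoly K x = X ^ 2 + C a * X + C b) :
    IsIntegral K x :=
  minpoly.ne_zero_iff.1 <| hx ▸ (by monicity! : (X ^ 2 + C a * X + C b).Monic).ne_zero

theorem finrank_adjoin_simple_of_minpoly_eq (hx : minpoly K x = X ^ 2 + C a * X + C b) :
    finrank K K⟮x⟯ = 2 := by
  rw [adjoin.finrank (isIntegral_of_minpoly_eq_quadratic hx), hx]
  compute_degree!

theorem trace_adjoin_simple_gen (hx : minpoly K x = X ^ 2 + C a * X + C b) :
    Algebra.trace K K⟮x⟯ (AdjoinSimple.gen K x) = -a := by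
  have hdeg : (X ^ 2 + C a * X + C b).natDegree = 2 := by compute_degree!
  rw [trace_adjoinSimpleGen (isIntegral_of_minpoly_eq_quadratic hx), hx,
    nextCoeff_of_natDegree_pos (by simp [hdeg]), hdeg]
  simp

theorem norm_adjoin_simple_gen (hx : minpoly K x = X ^ 2 + C a * X + C b) :
    Algebra.norm K (AdjoinSimple.gen K x) = b := by
  have hint := isIntegral_of_minpoly_eq_quadratic hx
  have hdeg : (X ^ 2 + C a * X + C b).natDegree = 2 := by compute_degree!
  rw [← adjoin.powerBasis_gen hint, Algebra.PowerBasis.norm_gen_eq_coeff_zero_minpoly,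
    adjoin.powerBasis_gen, minpoly_gen, adjoin.powerBasis_dim, hx, hdeg]
  simp

end QuadraticGenerator

section Tower

theorem finrank_eq_thirtySix {M E : Type*} [Field M] [Field E] [Algebra M E] {ζ c d : M}
    (hζ : IsPrimitiveRoot ζ 6) {x y : E} (hx : x ^ 6 = algebraMap M E c)
    (hy : y ^ 6 = algebraMap M E d) (htop : M⟮x, y⟯ = ⊤) (hc2 : ∀ z : M, z ^ 2 ≠ c)
    (hc3 : ∀ z : M, z ^ 3 ≠ c) (hd2 : ∀ i < 2, ∀ z : M, z ^ 2 ≠ c ^ i * d)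
    (hd3 : ∀ i < 3, ∀ z : M, z ^ 3 ≠ c ^ i * d) : finrank M E = 36 := by
  have hsquarefree : Squarefree (2 * 3) :=
    (Nat.squarefree_mul (by norm_num)).2 ⟨Nat.prime_two.squarefree, Nat.prime_three.squarefree⟩
  have hprime {p : ℕ} (hp : p.Prime) (hp6 : p ∣ 2 * 3) : p = 2 ∨ p = 3 := by
    simpa only [Nat.prime_dvd_prime_iff_eq hp Nat.prime_two,
      Nat.prime_dvd_prime_iff_eq hp Nat.prime_three] using hp.dvd_mul.1 hp6
  refine finrank_eq_sq_of_squarefree hsquarefree hζ hx hy htop ?_ ?_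
  all_goals
    intro p hp hp6
    rcases hprime hp hp6 with rfl | rfl
    assumption'

variable {K L M : Type*} [Field K] [Field L] [Field M] [Algebra K L] [Algebra L M]

theorem sq_ne_algebraMap_algebraMap (h2 : (2 : K) ≠ 0) (hL : finrank K L = 2) {t : L}
    (ht : ∀ z : K, z ^ 2 ≠ Algebra.norm K t) (hM : finrank L M = 2) {c d : K} {s : M}
    (hs : s ^ 2 = algebraMap L M (algebraMap K L c)) (hsL : s ∉ (⊥ : IntermediateField L M))
    (hd : ∀ z : K, z ^ 2 ≠ d) (hcd : ∀ z : K, z ^ 2 ≠ c * d)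
    (hdisc : ∀ z : K, z ^ 2 ≠ (Algebra.trace K L t ^ 2 - 4 * Algebra.norm K t) * d)
    (hcdisc : ∀ z : K, z ^ 2 ≠ (Algebra.trace K L t ^ 2 - 4 * Algebra.norm K t) * (c * d))
    (y : M) : y ^ 2 ≠ algebraMap L M (algebraMap K L d) := by
  have h2L : (2 : L) ≠ 0 := map_ofNat (algebraMap K L) 2 ▸ (_root_.map_ne_zero _).2 h2
  refine sq_ne_algebraMap_of_finrank_eq_two h2L hM hs hsL
    (sq_ne_algebraMap_of_norm_eq h2 hL ht hd hdisc) ?_ y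
  rw [← map_mul]
  exact sq_ne_algebraMap_of_norm_eq h2 hL ht hcd hcdisc

theorem sq_ne_algebraMap_algebraMap_mul (h2 : (2 : K) ≠ 0) (hL : finrank K L = 2) {t : L}
    (ht : ∀ z : K, z ^ 2 ≠ Algebra.norm K t) (hM : finrank L M = 2) {c u : K} {s : M}
    (hs : s ^ 2 = algebraMap L M (algebraMap K L c)) (hsL : s ∉ (⊥ : IntermediateField L M))
    (hc : c ≠ 0) (hu : u ≠ 0) (y : M) : y ^ 2 ≠ algebraMap L M (algebraMap K L u * t) := by
  have h2L : (2 : L) ≠ 0 := map_ofNat (algebraMap K L) 2 ▸ (_root_.map_ne_zero _).2 h2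
  refine sq_ne_algebraMap_of_finrank_eq_two h2L hM hs hsL (sq_ne_algebraMap_mul hL ht hu) ?_ y
  rw [← mul_assoc, ← map_mul]
  exact sq_ne_algebraMap_mul hL ht (mul_ne_zero hc hu)

theorem finrank_eq_oneFortyFour_of_tower {E : Type*} [Field E] [Algebra K E] [Algebra L E]
    [Algebra M E] [IsScalarTower K L E] [IsScalarTower L M E] {a b : K}
    (h3 : ∀ z : K, z ^ 2 ≠ -3) (hb : ∀ z : K, z ^ 2 ≠ b)
    (hbd : ∀ z : K, z ^ 2 ≠ b * (a ^ 2 - 4 * b)) (h3b : ∀ z : K, z ^ 2 ≠ -3 * b)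
    (h3bd : ∀ z : K, z ^ 2 ≠ 3 * b * (4 * b - a ^ 2)) (hnc : ∀ z : K, z ^ 3 ≠ b)
    (hnr : ∀ z : K, z ^ 3 - 3 * b * z + a * b ≠ 0) (hL : finrank K L = 2) {t : L}
    (htrace : Algebra.trace K L t = -a) (hnorm : Algebra.norm K t = b)
    (h3L : ∀ z : L, z ^ 2 ≠ -3) (hM : finrank L M = 2) {ζ : M} (hζ : IsPrimitiveRoot ζ 6) {x y : E}
    (hx : x ^ 6 = algebraMap M E (algebraMap L M (algebraMap K L b)))
    (hy : y ^ 6 = algebraMap M E (algebraMap L M t)) (htop : M⟮x, y⟯ = ⊤) :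
    finrank K E = 144 := by
  have h6 : (6 : K) ≠ 0 := six_ne_zero_of_forall_sq_ne h3
  have h2 : (2 : K) ≠ 0 := fun h ↦ h6 (by linear_combination 3 * h)
  have h30 : (-3 : K) ≠ 0 := fun h ↦ h6 (by linear_combination -2 * h)
  have hb0 : b ≠ 0 := fun h ↦ hb 0 (by rw [h]; ring)
  have h6M : (6 : M) ≠ 0 :=
    map_ofNat (algebraMap L M) 6 ▸ (_root_.map_ne_zero _).2 (six_ne_zero_of_forall_sq_ne h3L)
  have hs : (2 * ζ - 1) ^ 2 = algebraMap L M (-3) := by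
    simpa only [map_neg, map_ofNat] using (isPrimitiveRoot_six_iff h6M).1 hζ
  have hsL := notMem_bot_of_pow_eq h3L hs
  rw [← map_ofNat (algebraMap K L), ← map_neg] at hs
  have hbt := hnorm.symm ▸ hb
  suffices h36 : finrank M E = 36 by
    rw [← finrank_mul_finrank K L E, ← finrank_mul_finrank L M E, hL, hM, h36]
  refine finrank_eq_thirtySix hζ hx hy htop ?_ ?_ (fun i _ ↦ ?_) (fun i hi ↦ ?_)
  · exact sq_ne_algebraMap_algebraMap h2 hL hbt hM hs hsL hb h3b
      (fun z hz ↦ hbd z (by rw [hz, hnorm, htrace]; ring))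
      (fun z hz ↦ h3bd z (by rw [hz, hnorm, htrace]; ring))
  · exact pow_ne_algebraMap_of_coprime_finrank (hM ▸ by norm_num)
      (pow_ne_algebraMap_of_coprime_finrank (hL ▸ by norm_num) hnc)
  · simpa only [map_mul, map_pow] using
      sq_ne_algebraMap_algebraMap_mul h2 hL hbt hM hs hsL h30 (pow_ne_zero i hb0)
  · rw [← map_pow, ← map_mul, ← hnorm]
    refine pow_ne_algebraMap_of_coprime_finrank (hM ▸ by norm_num) ?_
    refine cube_ne_pow_norm_mul h3 hL (hnorm.symm ▸ hnc) (fun z hz ↦ hnr z ?_) hi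
    rw [hnorm, htrace] at hz
    linear_combination hz

end Tower

theorem minpoly_pow_of_aeval_eq_zero {K E : Type*} [Field K] [Field E] [Algebra K E] {n : ℕ}
    {a b : K} (hirr : Irreducible (X ^ 2 + C a * X + C b)) {α : E}
    (hα : aeval α (X ^ (2 * n) + C a * X ^ n + C b) = 0) :
    minpoly K (α ^ n) = X ^ 2 + C a * X + C b := by
  refine (minpoly.eq_of_irreducible_of_monic hirr ?_ (by monicity!)).symm
  simpa [pow_mul'] using hα

theorem exists_root_pow_eq_isPrimitiveRoot {K E : Type*} [Field K] [Field E] [Algebra K E] {n : ℕ}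
    (hn : (n : K) ≠ 0) {a b : K} (hb : b ≠ 0)
    [hE : IsSplittingField K E (X ^ (2 * n) + C a * X ^ n + C b)] :
    ∃ α γ ζ : E, aeval α (X ^ (2 * n) + C a * X ^ n + C b) = 0 ∧ α ≠ 0 ∧
      γ ^ n = algebraMap K E b ∧ IsPrimitiveRoot ζ n := by
  have hn0 : n ≠ 0 := by rintro rfl; simp at hn
  have hnE : (n : E) ≠ 0 := map_natCast (algebraMap K E) n ▸ (_root_.map_ne_zero _).2 hn
  have hsplits : (X ^ (2 * n) + C (algebraMap K E a) * X ^ n + C (algebraMap K E b)).Splits := by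
    simpa using hE.splits
  have hdegree :
      (X ^ (2 * n) + C (algebraMap K E a) * X ^ n + C (algebraMap K E b)).degree ≠ 0 := by
    refine (lt_of_lt_of_le ?_ (le_degree_of_ne_zero (n := 2 * n) ?_)).ne'
    · exact_mod_cast Nat.mul_pos two_pos hn0.bot_lt
    · have h2n : 2 * n ≠ n := by omega
      simp [coeff_X_pow, coeff_C, hn0, h2n]
  obtain ⟨α, hα⟩ := hsplits.exists_eval_eq_zero hdegree
  simp only [eval_add, eval_mul, eval_pow, eval_X, eval_C] at hα
  have hα0 : α ≠ 0 := by
    rintro rfl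
    simp [hn0, hb] at hα
  obtain ⟨γ, hγ⟩ := exists_pow_eq_of_splits_s15 hn0 hα hsplits
  obtain ⟨ζ, hζ⟩ := exists_isPrimitiveRoot_of_splits hnE hα0 hα hsplits
  exact ⟨α, γ, ζ, by simpa using hα, hα0, hγ, hζ⟩

theorem finrank_adjoin_isPrimitiveRoot_six {L E : Type*} [Field L] [Field E] [Algebra L E]
    (h3 : ∀ z : L, z ^ 2 ≠ -3) {ζ : E} (hζ : IsPrimitiveRoot ζ 6) : finrank L L⟮ζ⟯ = 2 := by
  have h6 := six_ne_zero_of_forall_sq_ne h3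
  have : NeZero ((6 : ℕ) : L) := ⟨mod_cast h6⟩
  have hdeg : (cyclotomic 6 L).natDegree = 2 := natDegree_cyclotomic 6 L
  have hirr : Irreducible (cyclotomic 6 L) :=
    irreducible_of_degree_le_three_of_not_isRoot (hdeg ▸ by decide) fun z hz ↦
      h3 _ ((isPrimitiveRoot_six_iff h6).1 (isRoot_cyclotomic_iff.1 hz))
  have hroot : aeval ζ (cyclotomic 6 L) = 0 := by
    rw [aeval_def, eval₂_eq_eval_map, map_cyclotomic]
    exact hζ.isRoot_cyclotomic (by norm_num)
  rw [adjoin.finrank ⟨_, cyclotomic.monic 6 L, hroot⟩,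
    ← minpoly.eq_of_irreducible_of_monic hirr hroot (cyclotomic.monic 6 L), hdeg]

theorem finrank_eq_oneFortyFour_of_isSplittingField {K E : Type*} [Field K] [Field E] [Algebra K E]
    {a b : K} [IsSplittingField K E (X ^ (2 * 6) + C a * X ^ 6 + C b)]
    (hirr : Irreducible (X ^ 2 + C a * X + C b))
    (h3 : ∀ s : K, s ^ 2 ≠ -3) (hb : ∀ s : K, s ^ 2 ≠ b)
    (hbd : ∀ s : K, s ^ 2 ≠ b * (a ^ 2 - 4 * b)) (hd : ∀ s : K, s ^ 2 ≠ 3 * (4 * b - a ^ 2))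
    (h3b : ∀ s : K, s ^ 2 ≠ -3 * b) (h3bd : ∀ s : K, s ^ 2 ≠ 3 * b * (4 * b - a ^ 2))
    (hnc : ∀ c : K, c ^ 3 ≠ b) (hnr : ∀ r : K, r ^ 3 - 3 * b * r + a * b ≠ 0) :
    finrank K E = 144 := by
  have h6 : (6 : K) ≠ 0 := six_ne_zero_of_forall_sq_ne h3
  have h2 : (2 : K) ≠ 0 := fun h ↦ h6 (by linear_combination 3 * h)
  have hb0 : b ≠ 0 := fun h ↦ hb 0 (by rw [h]; ring)
  obtain ⟨α, γ, ζ, hα, hα0, hγ, hζ⟩ :=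
    exists_root_pow_eq_isPrimitiveRoot (E := E) (n := 6) (a := a) (mod_cast h6) hb0
  have hmin := minpoly_pow_of_aeval_eq_zero hirr hα
  have hL := finrank_adjoin_simple_of_minpoly_eq hmin
  have hnorm := norm_adjoin_simple_gen hmin
  have htrace := trace_adjoin_simple_gen hmin
  have h3L (z : K⟮α ^ 6⟯) : z ^ 2 ≠ -3 := by
    have h := sq_ne_algebraMap_of_norm_eq h2 hL (hnorm.symm ▸ hb) h3
      (fun z hz ↦ hd z (by rw [hz, hnorm, htrace]; ring)) z
    simpa only [map_neg, map_ofNat] using h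
  have hM := finrank_adjoin_isPrimitiveRoot_six h3L hζ
  have hζM : IsPrimitiveRoot (AdjoinSimple.gen K⟮α ^ 6⟯ ζ) 6 :=
    IsPrimitiveRoot.coe_submonoidClass_iff.1 hζ
  have : IsScalarTower K K⟮α ^ 6⟯⟮ζ⟯ E := .of_algebraMap_eq fun _ ↦ rfl
  have htop := adjoin_eq_top_of_isSplittingField hζM hα0 hα hγ
  exact finrank_eq_oneFortyFour_of_tower h3 hb hbd h3b h3bd hnc hnr hL htrace hnorm h3L hM hζM hγ
    rfl htop

theorem gal_order_oneFortyFour_of_12T81_general {K : Type*} [Field K] (a b : K)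
    (hirr : Irreducible (X ^ 2 + C a * X + C b))
    (h3 : ∀ s : K, s ^ 2 ≠ -3) (hb : ∀ s : K, s ^ 2 ≠ b)
    (hbd : ∀ s : K, s ^ 2 ≠ b * (a ^ 2 - 4 * b)) (hd : ∀ s : K, s ^ 2 ≠ 3 * (4 * b - a ^ 2))
    (h3b : ∀ s : K, s ^ 2 ≠ -3 * b) (h3bd : ∀ s : K, s ^ 2 ≠ 3 * b * (4 * b - a ^ 2))
    (hnc : ∀ c : K, c ^ 3 ≠ b) (hnr : ∀ r : K, r ^ 3 - 3 * b * r + a * b ≠ 0) :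
    Nat.card (X ^ 12 + C a * X ^ 6 + C b).Gal = 144 := by
  have h6 : (6 : K) ≠ 0 := six_ne_zero_of_forall_sq_ne h3
  have hb0 : b ≠ 0 := fun h ↦ hb 0 (by rw [h]; ring)
  have hdisc : a ^ 2 - 4 * b ≠ 0 := fun h ↦ hd 0 (by linear_combination 3 * h)
  have hsep : (X ^ (2 * 6) + C a * X ^ 6 + C b).Separable :=
    separable_X_pow_two_mul_add (mod_cast h6) hb0 hdisc
  rw [Gal.card_of_separable hsep]
  exact finrank_eq_oneFortyFour_of_isSplittingField hirr h3 hb hbd hd h3b h3bd hnc hnr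

theorem gal_order_oneFortyFour_of_12T81 (a b : ℚ) (f : ℚ[X])
    (hf : f = X ^ 12 + C a * X ^ 6 + C b) (hirr : Irreducible f)
    (hb_nsq : ¬ ∃ s : ℚ, s ^ 2 = b)
    (hbd : ¬ ∃ s : ℚ, s ^ 2 = b * (a ^ 2 - 4 * b))
    (hd : ¬ ∃ s : ℚ, s ^ 2 = 3 * (4 * b - a ^ 2))
    (h3b : ¬ ∃ s : ℚ, s ^ 2 = -3 * b)
    (h3bd : ¬ ∃ s : ℚ, s ^ 2 = 3 * b * (4 * b - a ^ 2))
    (hnc : ¬ ∃ c : ℚ, c ^ 3 = b)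
    (hnr : ¬ ∃ r : ℚ, r ^ 3 - 3 * b * r + a * b = 0) :
    Nat.card f.Gal = 144 := by
  have hquad : Irreducible (X ^ 2 + C a * X + C b) :=
    of_irreducible_expand (p := 6) (by norm_num) (by simpa [hf, ← pow_mul] using hirr)
  simp only [not_exists] at *
  have h3 (s : ℚ) : s ^ 2 ≠ -3 := by nlinarith [sq_nonneg s]
  exact hf ▸ gal_order_oneFortyFour_of_12T81_general a b hquad h3 hb_nsq hbd hd h3b h3bd hnc hnr
end
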